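/- Let A be a unital ring and c \in A a central element such that A is c-adically complete, i.e. the canonical ring homomorphism A \to \varprojlim_n A/c^n A is bijective, and such that the associated graded ring gr(A) = \bigoplus_{n\ge 0} c^n A/c^{n+1} A is left noetherian. Then for every finite index set I and every left A-submodule B of the free module A^I, B is closed in the c-adic topology of A^I: \bigcap_{n\ge 0} (B + c^n A^I) = B. -/

import Mathlib

open DirectSum

section

variable {A : Type*} [Ring A]

/-- A central element of a ring. -/
structure CentralElement (A : Type*) [Ring A] where
  c : A
  central : ∀ a : A, c * a = a * c

namespace CentralElement

variable (z : CentralElement A)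

theorem commute_pow (a : A) (n : ℕ) : z.c ^ n * a = a * z.c ^ n :=
  (Commute.pow_left (z.central a) n).eq

/-- The additive subgroup `cⁿA` of a ring `A` (`c` central). -/
def cPow (n : ℕ) : AddSubgroup A where
  carrier := {x | ∃ a : A, x = z.c ^ n * a}
  add_mem' := by
    rintro x y ⟨a, rfl⟩ ⟨b, rfl⟩
    exact ⟨a + b, by rw [mul_add]⟩
  zero_mem' := ⟨0, by rw [mul_zero]⟩
  neg_mem' := by
    rintro x ⟨a, rfl⟩
    exact ⟨-a, by rw [mul_neg]⟩

theorem cPow_mul_mem {m n : ℕ} {x y : A} (hx : x ∈ z.cPow m) (hy : y ∈ z.cPow n) :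
    x * y ∈ z.cPow (m + n) := by
  obtain ⟨a, rfl⟩ := hx
  obtain ⟨b, rfl⟩ := hy
  refine ⟨a * b, ?_⟩
  rw [pow_add, mul_assoc, ← mul_assoc a, ← z.commute_pow a n, mul_assoc, mul_assoc]

instance : SetLike.GradedMonoid z.cPow where
  one_mem := ⟨1, by rw [pow_zero, one_mul]⟩
  mul_mem _ _ _ _ := z.cPow_mul_mem

/-- The graded ring `⨁ₙ cⁿA` attached to the `c`-adic filtration of `A`. -/
abbrev CAdicRees := ⨁ n, z.cPow n

theorem mem_succ_of_right {u v : z.CAdicRees}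
    (hv : ∀ n, (v n : A) ∈ z.cPow (n + 1)) (n : ℕ) :
    ((u * v) n : A) ∈ z.cPow (n + 1) := by
  classical
  rw [DirectSum.coe_mul_apply]
  refine AddSubgroup.sum_mem _ ?_
  rintro ⟨i, j⟩ hij
  obtain ⟨-, hsum⟩ := Finset.mem_filter.mp hij
  have h : (u i : A) * (v j : A) ∈ z.cPow (i + (j + 1)) :=
    z.cPow_mul_mem (u i).2 (hv j)
  have hidx : i + (j + 1) = n + 1 := by omega
  rwa [hidx] at h

theorem mem_succ_of_left {u v : z.CAdicRees}
    (hu : ∀ n, (u n : A) ∈ z.cPow (n + 1)) (n : ℕ) :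
    ((u * v) n : A) ∈ z.cPow (n + 1) := by
  classical
  rw [DirectSum.coe_mul_apply]
  refine AddSubgroup.sum_mem _ ?_
  rintro ⟨i, j⟩ hij
  obtain ⟨-, hsum⟩ := Finset.mem_filter.mp hij
  have h : (u i : A) * (v j : A) ∈ z.cPow (i + 1 + j) :=
    z.cPow_mul_mem (hu i) (v j).2
  have hidx : i + 1 + j = n + 1 := by omega
  rwa [hidx] at h

/-- The congruence relation on `⨁ₙ cⁿA` whose quotient is the associated graded ring
`gr(A) = ⨁ₙ cⁿA / cⁿ⁺¹A` of the `c`-adic filtration. -/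
def grCon : RingCon z.CAdicRees where
  r x y := ∀ n, (x n : A) - (y n : A) ∈ z.cPow (n + 1)
  iseqv := by
    refine ⟨fun x n => by simpa using (z.cPow (n + 1)).zero_mem, ?_, ?_⟩
    · intro x y h n
      simpa using (z.cPow (n + 1)).neg_mem (h n)
    · intro x y w h1 h2 n
      simpa using (z.cPow (n + 1)).add_mem (h1 n) (h2 n)
  add' := by
    intro a b a' b' h1 h2 n
    have := (z.cPow (n + 1)).add_mem (h1 n) (h2 n)
    rw [DirectSum.add_apply, DirectSum.add_apply, AddSubgroup.coe_add, AddSubgroup.coe_add]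
    convert this using 1
    abel
  mul' := by
    intro a b a' b' h1 h2 n
    have key : a * a' - b * b' = a * (a' - b') + (a - b) * b' := by noncomm_ring
    have m1 : ((a * (a' - b')) n : A) ∈ z.cPow (n + 1) :=
      z.mem_succ_of_right (fun m => by
        rw [DirectSum.sub_apply, AddSubgroup.coe_sub]; exact h2 m) n
    have m2 : (((a - b) * b') n : A) ∈ z.cPow (n + 1) :=
      z.mem_succ_of_left (fun m => by
        rw [DirectSum.sub_apply, AddSubgroup.coe_sub]; exact h1 m) n
    have : ((a * a' - b * b') n : A) ∈ z.cPow (n + 1) := by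
      rw [key, DirectSum.add_apply, AddSubgroup.coe_add]
      exact (z.cPow (n + 1)).add_mem m1 m2
    rwa [DirectSum.sub_apply, AddSubgroup.coe_sub] at this

/-- The associated graded ring `gr(A) = ⨁ₙ cⁿA / cⁿ⁺¹A` of the `c`-adic filtration of
`A`, realized as the quotient of the graded ring `⨁ₙ cⁿA` by the homogeneous two-sided
ideal `⨁ₙ cⁿ⁺¹A`. -/
abbrev CAdicGraded := z.grCon.Quotient


/-- The congruence relation `a ~ b ↔ a - b ∈ cⁿA`; its quotient ring is `A/cⁿA`. -/
def adicCon (n : ℕ) : RingCon A where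
  r a b := ∃ x : A, a - b = z.c ^ n * x
  iseqv := by
    refine ⟨fun a => ⟨0, by simp⟩, ?_, ?_⟩
    · rintro a b ⟨x, hx⟩
      exact ⟨-x, by rw [mul_neg, ← hx]; abel⟩
    · rintro a b d ⟨x, hx⟩ ⟨y, hy⟩
      exact ⟨x + y, by rw [mul_add, ← hx, ← hy]; abel⟩
  add' := by
    rintro a b a' b' ⟨x, hx⟩ ⟨y, hy⟩
    exact ⟨x + y, by rw [mul_add, ← hx, ← hy]; abel⟩
  mul' := by
    rintro a b a' b' ⟨x, hx⟩ ⟨y, hy⟩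
    refine ⟨a * y + x * b', ?_⟩
    calc a * a' - b * b' = a * (a' - b') + (a - b) * b' := by noncomm_ring
      _ = a * (z.c ^ n * y) + z.c ^ n * x * b' := by rw [hx, hy]
      _ = z.c ^ n * (a * y) + z.c ^ n * (x * b') := by
          rw [← mul_assoc, ← z.commute_pow a n, mul_assoc, mul_assoc]
      _ = z.c ^ n * (a * y + x * b') := by rw [mul_add]

/-- The transition map `A/cⁿ⁺¹A → A/cⁿA` of the inverse system. -/
def adicTransition (n : ℕ) : (z.adicCon (n + 1)).Quotient → (z.adicCon n).Quotient :=
  Quotient.map' id (by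
    rintro a b ⟨x, hx⟩
    exact ⟨z.c * x, by show a - b = _; rw [hx, pow_succ, mul_assoc]⟩)

/-- The inverse limit `lim_n A/cⁿA`, realized as the set of sequences compatible with
the transition maps. -/
def AdicLim : Type _ :=
  { f : ∀ n : ℕ, (z.adicCon n).Quotient // ∀ n : ℕ, z.adicTransition n (f (n + 1)) = f n }

/-- The canonical map `A → lim_n A/cⁿA` (the underlying function of the canonical ring
homomorphism). -/
def toAdicLim (a : A) : z.AdicLim :=
  ⟨fun n => (z.adicCon n).mk' a, fun _ => rfl⟩

section Modules

variable (M : Type*) [AddCommGroup M] [Module A M]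

/-- The submodule `cⁿM` of a left `A`-module `M` (`c` central in `A`). -/
def cPowSMul (n : ℕ) : Submodule A M where
  carrier := {x | ∃ m : M, x = z.c ^ n • m}
  add_mem' := by
    rintro x y ⟨m, rfl⟩ ⟨m', rfl⟩
    exact ⟨m + m', by rw [smul_add]⟩
  zero_mem' := ⟨0, by rw [smul_zero]⟩
  smul_mem' := by
    rintro a x ⟨m, rfl⟩
    exact ⟨a • m, by rw [smul_smul, smul_smul, z.commute_pow a n]⟩

theorem cPowSMul_antitone (n : ℕ) : z.cPowSMul M (n + 1) ≤ z.cPowSMul M n := by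
  rintro x ⟨m, rfl⟩
  exact ⟨z.c • m, by rw [pow_succ, mul_smul]⟩

/-- The transition map `M/cⁿ⁺¹M → M/cⁿM` of the inverse system. -/
def modTransition (n : ℕ) : (M ⧸ z.cPowSMul M (n + 1)) →ₗ[A] M ⧸ z.cPowSMul M n :=
  Submodule.mapQ _ _ LinearMap.id (z.cPowSMul_antitone M n)

/-- The inverse limit `lim_n M/cⁿM`, realized as the set of sequences compatible with
the transition maps. -/
def ModuleAdicLim : Type _ :=
  { f : ∀ n : ℕ, M ⧸ z.cPowSMul M n // ∀ n : ℕ, z.modTransition M n (f (n + 1)) = f n }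

/-- The canonical map `M → lim_n M/cⁿM` (the underlying function of the canonical
`A`-module homomorphism). -/
def toModuleAdicLim (x : M) : z.ModuleAdicLim M :=
  ⟨fun n => Submodule.Quotient.mk x, fun n => by
    simp [modTransition, Submodule.mapQ_apply]⟩

end Modules

end CentralElement

namespace CentralElement

variable (z : CentralElement A)

/-- The components of the projection from the Rees ring onto `A/cA`. -/
noncomputable def reesComp : ∀ n : ℕ, z.cPow n →+ (z.adicCon 1).Quotient
  | 0 => (z.adicCon 1).mk'.toAddMonoidHom.comp (z.cPow 0).subtype
  | _ + 1 => 0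

theorem mk_c_pow_succ (n : ℕ) (a : A) : (z.adicCon 1).mk' (z.c ^ (n + 1) * a) = 0 := by
  rw [← map_zero (z.adicCon 1).mk']
  refine (RingCon.eq (z.adicCon 1)).2 ?_
  exact ⟨z.c ^ n * a, by rw [sub_zero, pow_one, pow_succ', mul_assoc]⟩

theorem eq_of_mk (a : A) (h : (z.adicCon 1).mk' a = 0) : ∃ x, a = z.c * x := by
  rw [← map_zero (z.adicCon 1).mk'] at h
  obtain ⟨x, hx⟩ := (RingCon.eq (z.adicCon 1)).1 h
  exact ⟨x, by simpa using hx⟩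

/-- The projection from the Rees ring onto `A/cA`. -/
noncomputable def reesProj : z.CAdicRees →+* (z.adicCon 1).Quotient :=
  DirectSum.toSemiring z.reesComp (map_one (z.adicCon 1).mk') (by
    rintro (_ | i) (_ | j) a b
    · exact map_mul (z.adicCon 1).mk' (a : A) (b : A)
    · exact (mul_zero _).symm
    · exact (zero_mul _).symm
    · exact (zero_mul _).symm)

theorem reesProj_apply (u : z.CAdicRees) : z.reesProj u = (z.adicCon 1).mk' (u 0 : A) := by
  induction u using DirectSum.induction_on with
  | zero => simp
  | of i x =>
    refine (DirectSum.toSemiring_of _ _ _ _ _).trans ?_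
    rcases i with _ | i
    · rw [DirectSum.of_eq_same]; rfl
    · rw [DirectSum.of_eq_of_ne _ _ _ (by simp)]
      simp [reesComp]
  | add x y hx hy => rw [map_add, hx, hy, DirectSum.add_apply, AddSubgroup.coe_add, map_add]

theorem noeth_quot (hnoeth : IsNoetherianRing z.CAdicGraded) :
    IsNoetherianRing (z.adicCon 1).Quotient := by
  refine isNoetherianRing_of_surjective z.CAdicGraded _ (z.grCon.lift z.reesProj ?_) ?_
  · intro u v h
    have h0 := h 0
    change z.reesProj u = z.reesProj v
    rw [reesProj_apply, reesProj_apply]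
    exact (RingCon.eq (z.adicCon 1)).2 h0
  · intro r
    obtain ⟨a, rfl⟩ := (z.adicCon 1).mk'_surjective r
    refine ⟨z.grCon.mk' (DirectSum.of (fun n => z.cPow n) 0 ⟨a, a, by simp⟩), ?_⟩
    rw [RingCon.lift_mk', reesProj_apply, DirectSum.of_eq_same]

section

variable {ι : Type} [Fintype ι] (B : Submodule A (ι → A))

/-- The leading coefficients of degree `n` of elements of `B`. -/
def lead (n : ℕ) : Submodule A (ι → A) where
  carrier := {m | ∃ w, z.c ^ n • m + z.c ^ (n + 1) • w ∈ B}
  zero_mem' := ⟨0, by simp⟩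
  add_mem' := by
    rintro x y ⟨v, hv⟩ ⟨w, hw⟩
    refine ⟨v + w, ?_⟩
    convert B.add_mem hv hw using 1
    rw [smul_add, smul_add]; abel
  smul_mem' := by
    rintro a x ⟨v, hv⟩
    refine ⟨a • v, ?_⟩
    convert B.smul_mem a hv using 1
    rw [smul_add, smul_smul, smul_smul, smul_smul, smul_smul, z.commute_pow, z.commute_pow]

theorem lead_mono : Monotone (z.lead B) := by
  refine monotone_nat_of_le_succ ?_
  rintro n x ⟨v, hv⟩
  refine ⟨v, ?_⟩
  convert B.smul_mem z.c hv using 1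
  rw [smul_add, smul_smul, smul_smul, ← pow_succ', ← pow_succ']

def red (ι : Type) : (ι → A) →ₛₗ[(z.adicCon 1).mk'] (ι → (z.adicCon 1).Quotient) where
  toFun m i := (z.adicCon 1).mk' (m i)
  map_add' x y := by ext i; simp
  map_smul' a x := by ext i; simp

theorem red_eq {x y : ι → A} (h : z.red ι x = z.red ι y) : ∃ w, x = y + z.c • w := by
  have : ∀ i, ∃ w, x i - y i = z.c * w := fun i => by
    apply z.eq_of_mk
    rw [map_sub, sub_eq_zero]
    exact congrFun h i
  choose w hw using this
  refine ⟨w, ?_⟩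
  ext i
  simp [← hw i]

theorem key (hnoeth : IsNoetherianRing z.CAdicGraded) :
    ∃ (D k : ℕ) (b : Fin k → ι → A), (∀ j, b j ∈ B) ∧ ∀ n, ∀ y w : ι → A,
      z.c ^ (n + D) • y + z.c ^ (n + D + 1) • w ∈ B → ∃ a : Fin k → A, ∃ v : ι → A,
        z.c ^ (n + D) • y = (∑ j, (z.c ^ n * a j) • b j) + z.c ^ (n + D + 1) • v := by
  have := z.noeth_quot hnoeth
  haveI : RingHomSurjective (z.adicCon 1).mk' := ⟨(z.adicCon 1).mk'_surjective⟩
  let P : ℕ →o Submodule (z.adicCon 1).Quotient (ι → (z.adicCon 1).Quotient) :=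
    ⟨fun n => (z.lead B n).map (z.red ι), fun i j h => Submodule.map_mono (z.lead_mono B h)⟩
  obtain ⟨D, hD⟩ := monotone_stabilizes_iff_noetherian.2 inferInstance P
  obtain ⟨k, s, hs⟩ := Submodule.fg_iff_exists_fin_generating_family.1
    (IsNoetherian.noetherian (P D))
  have hmem : ∀ j, ∃ m ∈ z.lead B D, z.red ι m = s j := fun j => by
    have : s j ∈ P D := hs ▸ Submodule.subset_span ⟨j, rfl⟩
    exact this
  choose m hm hms using hmem
  choose v hv using hm
  refine ⟨D, k, _, hv, ?_⟩
  intro n y w hyw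
  have hy : z.red ι y ∈ P D := by
    rw [hD (n + D) (by omega)]
    exact ⟨y, ⟨w, hyw⟩, rfl⟩
  rw [← hs, Submodule.mem_span_range_iff_exists_fun] at hy
  obtain ⟨r, hr⟩ := hy
  choose a ha using fun j => (z.adicCon 1).mk'_surjective (r j)
  obtain ⟨u, hu⟩ := z.red_eq (x := y) (y := ∑ j, a j • m j) (by
    rw [← hr, map_sum]
    refine Finset.sum_congr rfl fun j _ => ?_
    rw [LinearMap.map_smulₛₗ, ha, hms])
  refine ⟨a, u - ∑ j, a j • v j, ?_⟩
  have h1 : ∀ j, (z.c ^ n * a j) • (z.c ^ D • m j + z.c ^ (D + 1) • v j)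
      = z.c ^ (n + D) • a j • m j + z.c ^ (n + D + 1) • a j • v j := fun j => by
    rw [smul_add, smul_smul, smul_smul, smul_smul, smul_smul, mul_assoc, mul_assoc,
      ← z.commute_pow, ← z.commute_pow, ← mul_assoc, ← mul_assoc, ← pow_add, ← pow_add, add_assoc]
  rw [Finset.sum_congr rfl fun j _ => h1 j, Finset.sum_add_distrib, ← Finset.smul_sum,
    ← Finset.smul_sum, smul_sub, hu, smul_add, smul_smul, ← pow_succ]
  abel

end

theorem exists_limit (hc : Function.Bijective z.toAdicLim) (s : ℕ → A)
    (hs : ∀ n, ∃ x, s (n + 1) - s n = z.c ^ n * x) :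
    ∃ a, ∀ n, ∃ x, a - s n = z.c ^ n * x := by
  obtain ⟨a, ha⟩ := hc.2 ⟨fun n => (z.adicCon n).mk' (s n), fun n =>
    (RingCon.eq (z.adicCon n)).2 (hs n)⟩
  refine ⟨a, fun n => ?_⟩
  have := congrFun (congrArg Subtype.val ha) n
  exact (RingCon.eq (z.adicCon n)).1 this

theorem eq_zero_of (hc : Function.Bijective z.toAdicLim) (a : A)
    (h : ∀ n, ∃ x, a = z.c ^ n * x) : a = 0 := by
  apply hc.1
  apply Subtype.ext
  funext n
  obtain ⟨x, hx⟩ := h n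
  exact (RingCon.eq (z.adicCon n)).2 ⟨x, by rw [sub_zero, hx]⟩

end CentralElement

open CentralElement

/-- let `A` be a unital ring and `c ∈ A` a central element such that `A` is
`c`-adically complete (the canonical ring homomorphism `A → lim_n A/cⁿA` is bijective)
and such that the associated graded ring `gr(A) = ⨁ₙ cⁿA/cⁿ⁺¹A` is left noetherian.
Then for every finite index set `ι` and every left `A`-submodule `B` of the free module
`A^ι`, `B` is closed in the `c`-adic topology of `A^ι`: `⋂ₙ (B + cⁿ·A^ι) = B`. -/
theorem submodule_closed_in_adic_topology
    (z : CentralElement A)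
    (hcomplete : Function.Bijective z.toAdicLim)
    (hnoeth : IsNoetherianRing z.CAdicGraded)
    (ι : Type) [Fintype ι] (B : Submodule A (ι → A)) :
    (⨅ n : ℕ, B ⊔ z.cPowSMul (ι → A) n) = B := by
  refine le_antisymm ?_ (le_iInf fun n => le_sup_left)
  intro x hx
  rw [Submodule.mem_iInf] at hx
  have hx' : ∀ n, ∃ w, x - z.c ^ n • w ∈ B := fun n => by
    obtain ⟨b, hb, _, ⟨w, rfl⟩, h⟩ := Submodule.mem_sup.1 (hx n)
    exact ⟨w, by rwa [← h, add_sub_cancel_right]⟩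
  obtain ⟨D, k, b, hb, key⟩ := z.key B hnoeth
  obtain ⟨w0, hw0⟩ := hx' D
  have step : ∀ n, ∀ y : ι → A, x - z.c ^ (n + D) • y ∈ B → ∃ a : Fin k → A, ∃ v : ι → A,
      z.c ^ (n + D) • y = (∑ j, (z.c ^ n * a j) • b j) + z.c ^ (n + D + 1) • v := by
    intro n y hy
    obtain ⟨w, hw⟩ := hx' (n + D + 1)
    refine key n y (-w) ?_
    convert B.sub_mem hw hy using 1
    rw [smul_neg]; abel
  have stepB : ∀ n, ∀ y v : ι → A, ∀ a : Fin k → A, x - z.c ^ (n + D) • y ∈ B →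
      z.c ^ (n + D) • y = (∑ j, (z.c ^ n * a j) • b j) + z.c ^ (n + D + 1) • v →
      x - z.c ^ (n + 1 + D) • v ∈ B := by
    intro n y v a hy h
    have e : n + 1 + D = n + D + 1 := by omega
    rw [e]
    have hs : (∑ j, (z.c ^ n * a j) • b j) ∈ B :=
      B.sum_mem fun j _ => B.smul_mem _ (hb j)
    convert B.add_mem hy hs using 1
    rw [h]; abel
  choose! fa fv hf using step
  let Y : ℕ → ι → A := fun n => Nat.rec w0 (fun n y => fv n y) n
  have hY : ∀ n, x - z.c ^ (n + D) • Y n ∈ B := by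
    intro n
    induction n with
    | zero => simpa [Y] using hw0
    | succ n ih => exact stepB n (Y n) _ _ ih (hf n _ ih)
  let S : ℕ → Fin k → A := fun n j => ∑ i ∈ Finset.range n, z.c ^ i * fa i (Y i) j
  have hS : ∀ n, z.c ^ D • w0 = (∑ j, S n j • b j) + z.c ^ (n + D) • Y n := by
    intro n
    induction n with
    | zero => simp [S, Y]
    | succ n ih =>
      have e : n + 1 + D = n + D + 1 := by omega
      rw [ih, hf n _ (hY n), e]
      simp only [S, Finset.sum_range_succ, add_smul, Finset.sum_add_distrib]
      exact (add_assoc _ _ _).symm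
  have hlim : ∀ j, ∃ a, ∀ n, ∃ t, a - S n j = z.c ^ n * t := fun j =>
    z.exists_limit hcomplete (fun n => S n j) fun n =>
      ⟨fa n (Y n) j, by simp [S, Finset.sum_range_succ]⟩
  choose a ha using hlim
  choose t ht using ha
  have hfin : z.c ^ D • w0 - ∑ j, a j • b j = 0 := by
    ext i
    apply z.eq_zero_of hcomplete
    intro n
    refine ⟨(z.c ^ D • Y n - ∑ j, t j n • b j) i, ?_⟩
    have : z.c ^ D • w0 - ∑ j, a j • b j = z.c ^ n • (z.c ^ D • Y n - ∑ j, t j n • b j) := by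
      have h1 : ∀ j, a j • b j = S n j • b j + z.c ^ n • t j n • b j := fun j => by
        rw [smul_smul, ← ht, sub_smul]; abel
      rw [hS n, Finset.sum_congr rfl fun j _ => h1 j, Finset.sum_add_distrib, smul_sub,
        smul_smul, ← pow_add, Finset.smul_sum]
      abel
    rw [this]; rfl
  have hsum : (∑ j, a j • b j) ∈ B := B.sum_mem fun j _ => B.smul_mem _ (hb j)
  rw [← sub_eq_zero.1 hfin] at hsum
  simpa using B.add_mem hw0 hsum

end
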